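/- arXiv:1207.7295 — 5 statements merged into one kernel-verified Lean document; each statement's English description precedes it below -/
import Mathlib

section
/- For every n ≥ 1, the map sending a pair (P, j) — where P is a Dyck path of semilength n whose last descent has length k and 0 ≤ j ≤ k — to the son of P at height j, is a bijection from the set of all such pairs onto the set of all Dyck paths of semilength n+1. In other words, every Dyck path of semilength n+1 is obtained exactly once by the ECO construction. -/
/-!
Inserting a peak into a path adds the heights `h` and `h + 1` next to an existing height `h`, so it
neither creates nor destroys the Dyck property, wherever the peak is inserted.

A path whose last descent has length at least `j` is `A ++ (-1)^j`, and its son at height `j` is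
`A ++ [1, -1] ++ (-1)^j`: the inserted up step is the last up step of the son. So the father and the
height can be read off the son by removing its last peak, and in a nonempty Dyck path there is such
a peak, since the path must go up somewhere and has to come back down to height `0`.
-/

/-- A Dyck path is a list of steps in `{+1, -1}` whose partial sums (heights)
are all nonnegative and whose total sum is `0`. -/
def IsDyck (s : List ℤ) : Prop :=
  (∀ x ∈ s, x = 1 ∨ x = -1) ∧ (∀ i : ℕ, 0 ≤ (s.take i).sum) ∧ s.sum = 0

/-- The area of a path: the sum of all heights `h_0, …, h_{length}`. -/
def area (s : List ℤ) : ℤ :=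
  ∑ i ∈ Finset.range (s.length + 1), (s.take i).sum

/-- The length of the last descent, i.e. of the final maximal run of `-1` steps. -/
def lastDescentLen (s : List ℤ) : ℕ :=
  (s.reverse.takeWhile (fun x => x == (-1 : ℤ))).length

/-- The son of a path `s` at height `j`: insert a peak `+1, -1` immediately
after position `length - j`. -/
def son (s : List ℤ) (j : ℕ) : List ℤ :=
  s.take (s.length - j) ++ [1, -1] ++ s.drop (s.length - j)

section Lists

variable {α : Type*} {a : α}

theorem replicate_prefix_iff_le_length_takeWhile [DecidableEq α] {n : ℕ} {l : List α} :
    List.replicate n a <+: l ↔ n ≤ (l.takeWhile (· == a)).length := by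
  induction l generalizing n with
  | nil => simp
  | cons b l ih =>
    cases n with
    | zero => simp
    | succ n =>
      by_cases hb : b = a
      · simp [List.replicate_succ, hb, ih]
      · simp [List.replicate_succ, hb, Ne.symm hb]

theorem exists_eq_append_cons_notMem_of_mem {l : List α} (h : a ∈ l) :
    ∃ A B, l = A ++ a :: B ∧ a ∉ B := by
  obtain ⟨B, A, hl, hB⟩ := List.eq_append_cons_of_mem (List.mem_reverse.2 h)
  exact ⟨A.reverse, B.reverse, by simpa using congrArg List.reverse hl, by simpa using hB⟩

theorem append_cons_inj_of_notMem_right {A B A' B' : List α} (hB : a ∉ B) (hB' : a ∉ B') :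
    A ++ a :: B = A' ++ a :: B' ↔ A = A' ∧ B = B' := by
  refine ⟨fun h => ?_, fun ⟨hAA', hBB'⟩ => hAA' ▸ hBB' ▸ rfl⟩
  rcases List.append_eq_append_iff.1 h with ⟨C, rfl, hC⟩ | ⟨C, rfl, hC⟩
  · rcases List.cons_eq_append_iff.1 hC with ⟨rfl, hcons⟩ | ⟨D, rfl, rfl⟩
    · exact ⟨(List.append_nil A).symm, (List.cons.inj hcons).2.symm⟩
    · exact absurd List.mem_append_cons_self hB
  · rcases List.cons_eq_append_iff.1 hC with ⟨rfl, hcons⟩ | ⟨D, rfl, rfl⟩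
    · exact ⟨List.append_nil A', (List.cons.inj hcons).2⟩
    · exact absurd List.mem_append_cons_self hB'

end Lists

section PartialSums

variable {M : Type*} [AddMonoid M] [LE M]

theorem forall_sum_take_append_nonneg {A B : List M} :
    (∀ i, 0 ≤ ((A ++ B).take i).sum) ↔
      (∀ i, 0 ≤ (A.take i).sum) ∧ ∀ i, 0 ≤ A.sum + (B.take i).sum := by
  refine ⟨fun h => ⟨fun i => ?_, fun i => ?_⟩, fun ⟨hA, hB⟩ i => ?_⟩
  · simpa [← List.take_take] using h (min i A.length)
  · simpa [List.take_append, List.take_of_length_le] using h (A.length + i)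
  · rw [List.take_append, List.sum_append]
    rcases le_total i A.length with hi | hi
    · simpa [Nat.sub_eq_zero_of_le hi] using hA i
    · simpa [List.take_of_length_le hi] using hB (i - A.length)

theorem forall_add_sum_take_cons_nonneg {h x : M} {B : List M} :
    (∀ i, 0 ≤ h + ((x :: B).take i).sum) ↔ 0 ≤ h ∧ ∀ i, 0 ≤ h + x + (B.take i).sum := by
  rw [← Nat.and_forall_add_one]
  simp [add_assoc]

end PartialSums

theorem isDyck_insert_peak_iff {A B : List ℤ} : IsDyck (A ++ 1 :: -1 :: B) ↔ IsDyck (A ++ B) := by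
  have hsteps : (∀ x ∈ A ++ 1 :: -1 :: B, x = 1 ∨ x = -1) ↔ ∀ x ∈ A ++ B, x = 1 ∨ x = -1 := by
    simp [or_imp, forall_and]
  have hpeak : (∀ i, 0 ≤ A.sum + ((1 :: -1 :: B).take i).sum) ↔
      ∀ i, 0 ≤ A.sum + (B.take i).sum := by
    simp only [forall_add_sum_take_cons_nonneg, add_neg_cancel_right]
    refine ⟨fun h => h.2.2, fun h => ?_⟩
    have hA : 0 ≤ A.sum := by simpa using h 0
    exact ⟨hA, by omega, h⟩
  have hsum : (A ++ 1 :: -1 :: B).sum = (A ++ B).sum := by simp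
  rw [IsDyck, IsDyck, hsteps, forall_sum_take_append_nonneg, hpeak, hsum,
    forall_sum_take_append_nonneg]

theorem isDyck_son_iff {P : List ℤ} {j : ℕ} : IsDyck (son P j) ↔ IsDyck P := by
  simpa [son] using
    isDyck_insert_peak_iff (A := P.take (P.length - j)) (B := P.drop (P.length - j))

theorem length_son (P : List ℤ) (j : ℕ) : (son P j).length = P.length + 2 := by
  simp only [son, List.length_append, List.length_take, List.length_drop, List.length_cons,
    List.length_nil]
  omega

theorem le_lastDescentLen_iff_replicate_suffix {P : List ℤ} {j : ℕ} :
    j ≤ lastDescentLen P ↔ List.replicate j (-1) <:+ P := by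
  rw [lastDescentLen, ← replicate_prefix_iff_le_length_takeWhile, ← List.reverse_prefix,
    List.reverse_replicate]

theorem son_append_replicate (A : List ℤ) (j : ℕ) :
    son (A ++ List.replicate j (-1)) j = A ++ 1 :: List.replicate (j + 1) (-1) := by
  simp [son, List.replicate_succ]

theorem son_inj {P P' : List ℤ} {i j : ℕ} (hi : i ≤ lastDescentLen P)
    (hj : j ≤ lastDescentLen P') : son P i = son P' j ↔ P = P' ∧ i = j := by
  refine ⟨fun h => ?_, fun ⟨hP, hij⟩ => hP ▸ hij ▸ rfl⟩
  obtain ⟨A, rfl⟩ := le_lastDescentLen_iff_replicate_suffix.1 hi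
  obtain ⟨A', rfl⟩ := le_lastDescentLen_iff_replicate_suffix.1 hj
  have hnotMem (m : ℕ) : (1 : ℤ) ∉ List.replicate m (-1) := by simp [List.mem_replicate]
  rw [son_append_replicate, son_append_replicate,
    append_cons_inj_of_notMem_right (hnotMem _) (hnotMem _)] at h
  obtain ⟨rfl, hij⟩ := h
  obtain rfl : i = j := by simpa using congrArg List.length hij
  exact ⟨rfl, rfl⟩

namespace IsDyck

variable {Q B : List ℤ}

theorem eq_replicate_of_one_notMem (hQ : IsDyck Q) (hB : B ⊆ Q) (h : 1 ∉ B) :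
    B = List.replicate B.length (-1) :=
  List.eq_replicate_length.2 fun x hx => (hQ.1 x (hB hx)).resolve_left (ne_of_mem_of_not_mem hx h)

theorem one_mem (hQ : IsDyck Q) (hne : Q ≠ []) : 1 ∈ Q := by
  by_contra h
  have hsum : Q.sum = 0 := hQ.2.2
  rw [hQ.eq_replicate_of_one_notMem (List.Subset.refl Q) h] at hsum
  exact hne (by simpa using hsum)

theorem sum_nonpos_of_suffix (hQ : IsDyck Q) (hB : B <:+ Q) : B.sum ≤ 0 := by
  obtain ⟨A, rfl⟩ := hB
  have hA : 0 ≤ A.sum := by simpa using hQ.2.1 A.length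
  have hAB : A.sum + B.sum = 0 := by simpa using hQ.2.2
  omega

theorem exists_eq_append_one_cons_replicate (hQ : IsDyck Q) (hne : Q ≠ []) :
    ∃ A j, Q = A ++ 1 :: List.replicate (j + 1) (-1) := by
  obtain ⟨A, B, rfl, hB⟩ := exists_eq_append_cons_notMem_of_mem (hQ.one_mem hne)
  have hdown : B = List.replicate B.length (-1) :=
    hQ.eq_replicate_of_one_notMem (fun x hx => by simp [hx]) hB
  have hsum : (1 :: B).sum ≤ 0 := hQ.sum_nonpos_of_suffix (List.suffix_append A _)
  have hpos : B.length ≠ 0 := fun h => by simp [List.length_eq_zero_iff.1 h] at hsum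
  obtain ⟨j, hj⟩ := Nat.exists_eq_succ_of_ne_zero hpos
  exact ⟨A, j, by rw [← Nat.succ_eq_add_one, ← hj, ← hdown]⟩

theorem exists_son_eq (hQ : IsDyck Q) (hne : Q ≠ []) :
    ∃ P j, j ≤ lastDescentLen P ∧ son P j = Q := by
  obtain ⟨A, j, rfl⟩ := hQ.exists_eq_append_one_cons_replicate hne
  exact ⟨A ++ List.replicate j (-1), j,
    le_lastDescentLen_iff_replicate_suffix.2 (List.suffix_append _ _), son_append_replicate A j⟩

end IsDyck

/-- For every `n ≥ 1`, the ECO construction `(P, j) ↦ son P j`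
(where `P` is a Dyck path of semilength `n` and `0 ≤ j ≤ lastDescentLen P`)
produces Dyck paths of semilength `n + 1`, and every Dyck path of semilength
`n + 1` is obtained exactly once. -/
theorem eco_construction_bijective (n : ℕ) (hn : 1 ≤ n) :
    (∀ (P : List ℤ) (j : ℕ), IsDyck P → P.length = 2 * n → j ≤ lastDescentLen P →
      IsDyck (son P j) ∧ (son P j).length = 2 * (n + 1)) ∧
    (∀ Q : List ℤ, IsDyck Q → Q.length = 2 * (n + 1) →
      ∃! pj : List ℤ × ℕ,
        IsDyck pj.1 ∧ pj.1.length = 2 * n ∧ pj.2 ≤ lastDescentLen pj.1 ∧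
          son pj.1 pj.2 = Q) := by
  refine ⟨fun P j hP hlen _ => ⟨isDyck_son_iff.2 hP, by rw [length_son, hlen, mul_add]⟩,
    fun Q hQ hlen => ?_⟩
  have hne : Q ≠ [] := List.ne_nil_of_length_pos (by omega)
  obtain ⟨P, j, hj, rfl⟩ := hQ.exists_son_eq hne
  have hP : P.length = 2 * n := by
    rw [length_son] at hlen
    omega
  refine ⟨(P, j), ⟨isDyck_son_iff.1 hQ, hP, hj, rfl⟩, ?_⟩
  rintro ⟨P', i⟩ ⟨-, -, hi, hson⟩
  exact Prod.ext_iff.2 ((son_inj hi hj).1 hson)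
end

section
/- Let P be a Dyck path of semilength n whose last descent has length k, and let 0 ≤ j ≤ k. Then the son of P at height j has area equal to area(P) + 2j + 1; equivalently, the rank of the son (as a Dyck path of semilength n+1) equals rank(P) + j. -/
/-- The rank of a Dyck path of semilength `n`: `(area - n) / 2`. -/
def rank (n : ℕ) (s : List ℤ) : ℤ := (area s - n) / 2

/-!
Inserting a peak at a point of height `a` adds the two heights `a + 1` and `a` to the path and
leaves all other heights unchanged, so the area grows by `2 * a + 1`. In the son at height `j`, the
insertion point is followed by `j` steps `-1` of the original path, so it lies `j` above the end.
-/

lemma area_cons (x : ℤ) (s : List ℤ) : area (x :: s) = (s.length + 1) * x + area s := by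
  unfold area
  rw [List.length_cons, Finset.sum_range_succ']
  simp [Finset.sum_add_distrib]

/-- The coefficient of `a.sum` is `b.length` rather than `b.length + 1` because the height at the
junction is already counted in `area a`. -/
lemma area_append (a b : List ℤ) : area (a ++ b) = area a + b.length * a.sum + area b := by
  induction a with
  | nil => simp [area]
  | cons x a ih =>
    rw [List.cons_append, area_cons, area_cons, ih, List.sum_cons, List.length_append]
    push_cast
    ring

lemma area_insert_peak (a b : List ℤ) :
    area (a ++ [1, -1] ++ b) = area (a ++ b) + 2 * a.sum + 1 := by
  have area_peak : area [1, -1] = 1 := by decide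
  have sum_append_peak : (a ++ [1, -1]).sum = a.sum := by simp
  rw [area_append, area_append a [1, -1], area_append a b, area_peak, sum_append_peak,
    List.length_cons, List.length_singleton]
  push_cast
  ring

lemma area_son_eq_add_sum_take (s : List ℤ) (j : ℕ) :
    area (son s j) = area s + 2 * (s.take (s.length - j)).sum + 1 := by
  rw [son, area_insert_peak, List.take_append_drop]

lemma take_eq_replicate_of_le_length_takeWhile {α : Type*} [BEq α] [LawfulBEq α] {a : α}
    {l : List α} {n : ℕ} (h : n ≤ (l.takeWhile (· == a)).length) :
    l.take n = List.replicate n a := by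
  have take_takeWhile : l.take n = (l.takeWhile (· == a)).take n := by
    conv_lhs => rw [← List.takeWhile_append_dropWhile (p := (· == a)) (l := l)]
    exact List.take_append_of_le_length h
  rw [take_takeWhile, List.eq_replicate_iff]
  refine ⟨List.length_take_of_le h, fun x hx => ?_⟩
  exact beq_iff_eq.mp (List.mem_takeWhile_imp (p := (· == a)) (List.mem_of_mem_take hx))

lemma drop_eq_replicate_of_le_lastDescentLen {s : List ℤ} {j : ℕ} (hj : j ≤ lastDescentLen s) :
    s.drop (s.length - j) = List.replicate j (-1) := by
  rw [← List.reverse_inj, ← List.take_reverse, List.reverse_replicate]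
  exact take_eq_replicate_of_le_length_takeWhile hj

lemma sum_take_of_le_lastDescentLen {s : List ℤ} {j : ℕ} (hj : j ≤ lastDescentLen s) :
    (s.take (s.length - j)).sum = s.sum + j := by
  have h := List.sum_take_add_sum_drop s (s.length - j)
  rw [drop_eq_replicate_of_le_lastDescentLen hj, List.sum_replicate, nsmul_eq_mul] at h
  linarith

lemma rank_succ_of_area_eq {s t : List ℤ} {m : ℤ} (n : ℕ) (h : area t = area s + 2 * m + 1) :
    rank (n + 1) t = rank n s + m := by
  have shift : area t - (n + 1 : ℕ) = area s - n + 2 * m := by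
    rw [h]
    push_cast
    ring
  rw [rank, rank, shift, Int.add_mul_ediv_left _ _ two_ne_zero]

theorem area_son_general {s : List ℤ} {j : ℕ} (hj : j ≤ lastDescentLen s) :
    area (son s j) = area s + 2 * (s.sum + j) + 1 := by
  rw [area_son_eq_add_sum_take, sum_take_of_le_lastDescentLen hj]

/-- If `P` is a Dyck path of semilength `n` with last descent of
length `k` and `0 ≤ j ≤ k`, then the son of `P` at height `j` has area
`area P + 2j + 1`; equivalently its rank (as a path of semilength `n+1`)
is `rank P + j`. -/
theorem area_son (n k j : ℕ) (P : List ℤ) (hP : IsDyck P) (hlen : P.length = 2 * n)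
    (hk : lastDescentLen P = k) (hj : j ≤ k) :
    area (son P j) = area P + 2 * j + 1 ∧
    rank (n + 1) (son P j) = rank n P + j := by
  have harea : area (son P j) = area P + 2 * j + 1 := by
    simpa only [hP.2.2, zero_add] using area_son_general (hj.trans_eq hk.symm)
  exact ⟨harea, rank_succ_of_area_eq n harea⟩
end

section
/- Let P be a Dyck path of semilength n whose last descent has length k, and let 0 ≤ j < k. Then the son of P at height j is strictly below the son of P at height j+1 in the pointwise order on Dyck paths of semilength n+1, and no Dyck path of semilength n+1 lies strictly between them (i.e., the son at height j+1 covers the son at height j). Consequently the k+1 sons of P form a saturated chain in the pointwise order. -/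
/-- The pointwise order on paths: `P` lies weakly below `Q` when every height of
`P` is at most the corresponding height of `Q`. -/
def dyckLE (P Q : List ℤ) : Prop :=
  ∀ i : ℕ, (P.take i).sum ≤ (Q.take i).sum

lemma sum_take_append_swap {M : Type*} [AddCommMonoid M] (A C : List M) (x y : M) {i : ℕ}
    (hi : i ≠ A.length + 1) :
    ((A ++ x :: y :: C).take i).sum = ((A ++ y :: x :: C).take i).sum := by
  rcases Nat.lt_or_ge A.length i with h | h
  · obtain ⟨t, rfl⟩ : ∃ t, i = A.length + (t + 2) := ⟨i - A.length - 2, by omega⟩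
    simp only [List.take_length_add_append, List.take_succ_cons, List.sum_append, List.sum_cons,
      add_left_comm x y]
  · rw [List.take_append_of_le_length h, List.take_append_of_le_length h]

lemma eq_of_sum_take_eq_of_getElem_eq {M : Type*} [AddLeftCancelMonoid M] {L L' : List M} {m : ℕ}
    (hm : m < L.length) (hlen : L.length = L'.length)
    (hsum : ∀ i ≠ m + 1, (L.take i).sum = (L'.take i).sum) (hstep : L[m] = L'[m]) : L = L' := by
  refine List.eq_of_sum_take_eq hlen fun i _ => ?_
  by_cases hi : i = m + 1
  · rw [hi, List.sum_take_succ L m hm, List.sum_take_succ L' m (hlen ▸ hm),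
      hsum m m.lt_succ_self.ne, hstep]
  · exact hsum i hi

lemma dyckLE_append_swap (A C : List ℤ) {x y : ℤ} (hxy : x ≤ y) :
    dyckLE (A ++ x :: y :: C) (A ++ y :: x :: C) := by
  intro i
  by_cases hi : i = A.length + 1
  · simpa [hi, List.take_length_add_append] using hxy
  · exact (sum_take_append_swap A C x y hi).le

lemma eq_or_eq_of_dyckLE_append_swap {A C R : List ℤ} {x y : ℤ} (hR : ∀ z ∈ R, z = x ∨ z = y)
    (hlen : R.length = (A ++ x :: y :: C).length) (hlower : dyckLE (A ++ x :: y :: C) R)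
    (hupper : dyckLE R (A ++ y :: x :: C)) :
    R = A ++ x :: y :: C ∨ R = A ++ y :: x :: C := by
  have hlen' : R.length = (A ++ y :: x :: C).length := by simpa using hlen
  have hm : A.length < R.length := by simp [hlen]
  have sum_eq_lower : ∀ i ≠ A.length + 1, (R.take i).sum = ((A ++ x :: y :: C).take i).sum :=
    fun i hi => ((hupper i).trans_eq (sum_take_append_swap A C x y hi).symm).antisymm (hlower i)
  have sum_eq_upper : ∀ i ≠ A.length + 1, (R.take i).sum = ((A ++ y :: x :: C).take i).sum :=
    fun i hi => (sum_eq_lower i hi).trans (sum_take_append_swap A C x y hi)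
  rcases hR R[A.length] (List.getElem_mem hm) with hstep | hstep
  · exact .inl (eq_of_sum_take_eq_of_getElem_eq hm hlen sum_eq_lower (by simpa using hstep))
  · exact .inr (eq_of_sum_take_eq_of_getElem_eq hm hlen' sum_eq_upper (by simpa using hstep))

lemma replicate_lastDescentLen_suffix (s : List ℤ) :
    List.replicate (lastDescentLen s) (-1) <:+ s := by
  have descent_eq : s.reverse.takeWhile (· == -1) = List.replicate (lastDescentLen s) (-1) :=
    List.eq_replicate_length.2 fun x hx => by simpa using List.mem_takeWhile_imp hx
  rw [← List.reverse_prefix, List.reverse_replicate, ← descent_eq]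
  exact List.takeWhile_prefix _

lemma exists_eq_append_of_lt_lastDescentLen {s : List ℤ} {j : ℕ} (hj : j < lastDescentLen s) :
    ∃ A B : List ℤ, s = A ++ -1 :: B ∧ B.length = j := by
  obtain ⟨A, hA⟩ := replicate_lastDescentLen_suffix s
  obtain ⟨d, hd⟩ := Nat.exists_eq_add_of_le' (Nat.succ_le_of_lt hj)
  refine ⟨A ++ List.replicate d (-1), List.replicate j (-1), ?_, List.length_replicate⟩
  rw [← hA, List.append_assoc, ← List.replicate_succ, List.replicate_append_replicate, hd]

lemma son_append_length (A B : List ℤ) : son (A ++ B) B.length = A ++ 1 :: -1 :: B := by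
  simp [son]

lemma son_append_cons_length (A B : List ℤ) (x : ℤ) :
    son (A ++ x :: B) B.length = A ++ x :: 1 :: -1 :: B := by
  simpa using son_append_length (A ++ [x]) B

theorem son_covers_son_general {j : ℕ} {P : List ℤ} (hj : j < lastDescentLen P) :
    (dyckLE (son P j) (son P (j + 1)) ∧ son P j ≠ son P (j + 1)) ∧
    ¬ ∃ R : List ℤ, (∀ x ∈ R, x = 1 ∨ x = -1) ∧ R.length = P.length + 2 ∧
        dyckLE (son P j) R ∧ son P j ≠ R ∧
        dyckLE R (son P (j + 1)) ∧ R ≠ son P (j + 1) := by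
  obtain ⟨A, B, rfl, rfl⟩ := exists_eq_append_of_lt_lastDescentLen hj
  have lower_eq : son (A ++ -1 :: B) B.length = A ++ -1 :: 1 :: -1 :: B :=
    son_append_cons_length A B (-1)
  have upper_eq : son (A ++ -1 :: B) (B.length + 1) = A ++ 1 :: -1 :: -1 :: B :=
    son_append_length A (-1 :: B)
  rw [lower_eq, upper_eq]
  refine ⟨⟨dyckLE_append_swap A (-1 :: B) (by norm_num), by simp⟩, ?_⟩
  rintro ⟨R, hR, hlen, hlower, hne_lower, hupper, hne_upper⟩
  have hlen' : R.length = (A ++ -1 :: 1 :: -1 :: B).length := by simpa [add_assoc] using hlen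
  have eq_lower_or_eq_upper :=
    eq_or_eq_of_dyckLE_append_swap (fun x hx => (hR x hx).symm) hlen' hlower hupper
  exact eq_lower_or_eq_upper.elim hne_lower.symm hne_upper

/-- If `P` is a Dyck path of semilength `n` with last descent of
length `k` and `0 ≤ j < k`, then the son of `P` at height `j` is strictly below
the son of `P` at height `j + 1` in the pointwise order, and no Dyck path of
semilength `n + 1` lies strictly between them (the son at height `j+1` covers
the son at height `j`). -/
theorem son_covers_son (n k j : ℕ) (P : List ℤ) (hP : IsDyck P) (hlen : P.length = 2 * n)
    (hk : lastDescentLen P = k) (hj : j < k) :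
    (dyckLE (son P j) (son P (j + 1)) ∧ son P j ≠ son P (j + 1)) ∧
    ¬ ∃ R : List ℤ, IsDyck R ∧ R.length = 2 * (n + 1) ∧
        dyckLE (son P j) R ∧ son P j ≠ R ∧
        dyckLE R (son P (j + 1)) ∧ R ≠ son P (j + 1) := by
  obtain ⟨hlt, hcover⟩ := son_covers_son_general (hk ▸ hj)
  exact ⟨hlt, fun ⟨R, hR, hRlen, hbetween⟩ => hcover ⟨R, hR.1, by omega, hbetween⟩⟩
end

section
/- For all n ≥ 3, 0 ≤ k ≤ n−2, and i ∈ ℕ: the number of Dyck paths of semilength n with rank i that end with the step sequence +1, (−1)^{k+1}, +1, −1 (i.e., end with U D^{k+1} U D) equals the number of Dyck paths of semilength n−1 with rank i whose last descent has length exactly k+1. (Thus the coefficient of x^i in P_n^{(k)}(x) counts Dyck paths of semilength n−1 at rank i with final descent of length exactly k+1.) -/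
/-- `endsUDkUD s k` says the final `k + 3` steps of `s` are
`+1`, followed by `k + 1` copies of `-1`, followed by `+1, -1`
(i.e. `s` ends with `U D^{k+1} U D`). -/
def endsUDkUD (s : List ℤ) (k : ℕ) : Prop :=
  ∃ t : List ℤ, s = t ++ (1 :: (List.replicate (k + 1) (-1) ++ [1, -1]))

/-- The polynomial `P_n^{(k)}(x) = Σ_P x^{rank P}`, the sum being over all Dyck
paths `P` of semilength `n` ending with `U D^{k+1} U D`; the coefficient of
`x^i` is the number of such paths of rank `i`, i.e. of area `n + 2i`
(all ranks are at most `n(n-1)/2 ≤ n²`, so the range below is exhaustive). -/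
noncomputable def Pnk (n k : ℕ) : Polynomial ℤ :=
  ∑ i ∈ Finset.range (n * n + 1),
    Polynomial.C ((Nat.card {P : List ℤ // IsDyck P ∧ P.length = 2 * n ∧
      endsUDkUD P k ∧ area P = (n : ℤ) + 2 * i}) : ℤ) * Polynomial.X ^ i

/-!
Appending a final peak `U D` at height `0` turns a Dyck path ending with `U D^{k+1}` into one
ending with `U D^{k+1} U D`, and deleting that peak inverts this. The semilength and the area both
grow by `1`, so the rank is unchanged. A Dyck path has last descent of length `m > 0` exactly when
it ends with `U D^m`: it starts with an up step, so its last descent cannot be the whole path.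
-/

theorem isDyck_peak : IsDyck [1, -1] := by
  refine ⟨by simp, fun i ↦ ?_, by simp⟩
  rcases i with _ | _ | i <;> simp

theorem isDyck_append_iff_left {s t : List ℤ} (ht : IsDyck t) : IsDyck (s ++ t) ↔ IsDyck s := by
  have sum_append_eq : (s ++ t).sum = s.sum := by rw [List.sum_append, ht.2.2, add_zero]
  constructor
  · rintro ⟨steps, heights, sum_eq_zero⟩
    refine ⟨fun x hx ↦ steps x (List.mem_append_left t hx), fun i ↦ ?_,
      sum_append_eq ▸ sum_eq_zero⟩
    have height_nonneg := heights (min i s.length)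
    rwa [← List.take_take, List.take_left] at height_nonneg
  · rintro ⟨steps, heights, sum_eq_zero⟩
    refine ⟨fun x hx ↦ (List.mem_append.1 hx).elim (steps x) (ht.1 x), fun i ↦ ?_,
      sum_append_eq.trans sum_eq_zero⟩
    rw [List.take_append, List.sum_append]
    exact add_nonneg (heights i) (ht.2.1 _)

theorem area_append_s7 (s t : List ℤ) : area (s ++ t) = area s + t.length * s.sum + area t := by
  have heights_left : ∑ i ∈ Finset.range s.length, ((s ++ t).take i).sum =
      ∑ i ∈ Finset.range s.length, (s.take i).sum :=
    Finset.sum_congr rfl fun i hi ↦ by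
      rw [List.take_append_of_le_length (Finset.mem_range.1 hi).le]
  have heights_right (i : ℕ) : ((s ++ t).take (s.length + i)).sum = s.sum + (t.take i).sum := by
    rw [List.take_length_add_append, List.sum_append]
  have area_left : area s = ∑ i ∈ Finset.range s.length, (s.take i).sum + s.sum := by
    rw [area, Finset.sum_range_succ, List.take_length]
  calc area (s ++ t)
      = ∑ i ∈ Finset.range s.length, (s.take i).sum +
          ∑ i ∈ Finset.range (t.length + 1), (s.sum + (t.take i).sum) := by
        simp only [area, List.length_append, add_assoc, Finset.sum_range_add, heights_left,
          heights_right]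
    _ = ∑ i ∈ Finset.range s.length, (s.take i).sum + ((t.length + 1) * s.sum + area t) := by
        simp only [Finset.sum_add_distrib, Finset.sum_const, Finset.card_range, nsmul_eq_mul,
          Nat.cast_add, Nat.cast_one, area]
    _ = area s + t.length * s.sum + area t := by rw [area_left]; ring

theorem area_append_peak (s : List ℤ) : area (s ++ [1, -1]) = area s + 2 * s.sum + 1 := by
  have area_peak : area [1, -1] = 1 := by decide
  rw [area_append_s7, area_peak]
  rfl

theorem lastDescentLen_append_up_replicate (t : List ℤ) (m : ℕ) :
    lastDescentLen (t ++ 1 :: List.replicate m (-1)) = m := by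
  simp [lastDescentLen]

theorem exists_eq_append_up_replicate {s : List ℤ} (steps : ∀ x ∈ s, x = 1 ∨ x = -1)
    (up_mem : 1 ∈ s) : ∃ t m, s = t ++ 1 :: List.replicate m (-1) := by
  obtain ⟨u, v, reverse_eq, up_notMem⟩ := List.eq_append_cons_of_mem (List.mem_reverse.2 up_mem)
  have u_eq : u = List.replicate u.length (-1) := by
    refine List.eq_replicate_iff.2 ⟨rfl, fun x hx ↦ (steps x ?_).resolve_left ?_⟩
    · rw [← List.mem_reverse, reverse_eq]
      exact List.mem_append_left _ hx
    · rintro rfl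
      exact up_notMem hx
  refine ⟨v.reverse, u.length, ?_⟩
  rw [← List.reverse_reverse s, reverse_eq, u_eq]
  simp

theorem lastDescentLen_eq_iff_suffix_of_up_mem {s : List ℤ} {m : ℕ}
    (steps : ∀ x ∈ s, x = 1 ∨ x = -1) (up_mem : 1 ∈ s) :
    lastDescentLen s = m ↔ 1 :: List.replicate m (-1) <:+ s := by
  constructor
  · rintro rfl
    obtain ⟨t, m, rfl⟩ := exists_eq_append_up_replicate steps up_mem
    rw [lastDescentLen_append_up_replicate]
    exact List.suffix_append _ _
  · rintro ⟨t, rfl⟩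
    exact lastDescentLen_append_up_replicate t m

theorem IsDyck.up_mem {s : List ℤ} (hs : IsDyck s) (s_ne_nil : s ≠ []) : 1 ∈ s := by
  obtain ⟨x, t, rfl⟩ := List.exists_cons_of_ne_nil s_ne_nil
  have x_nonneg : 0 ≤ x := by simpa using hs.2.1 1
  obtain rfl : x = 1 := (hs.1 x List.mem_cons_self).resolve_right (by lia)
  exact List.mem_cons_self

theorem IsDyck.lastDescentLen_eq_iff_suffix {s : List ℤ} {m : ℕ} (hs : IsDyck s) (hm : m ≠ 0) :
    lastDescentLen s = m ↔ 1 :: List.replicate m (-1) <:+ s := by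
  rcases eq_or_ne s [] with rfl | s_ne_nil
  · simp [lastDescentLen, hm.symm]
  · exact lastDescentLen_eq_iff_suffix_of_up_mem hs.1 (hs.up_mem s_ne_nil)

theorem endsUDkUD_iff_exists_append_peak {P : List ℤ} {k : ℕ} :
    endsUDkUD P k ↔ ∃ Q, 1 :: List.replicate (k + 1) (-1) <:+ Q ∧ Q ++ [1, -1] = P := by
  constructor
  · rintro ⟨t, rfl⟩
    exact ⟨_, List.suffix_append t _, by simp⟩
  · rintro ⟨_, ⟨t, rfl⟩, rfl⟩
    exact ⟨t, by simp⟩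

theorem bijOn_append_peak (l k : ℕ) (a : ℤ) :
    Set.BijOn (· ++ [1, -1])
      {Q | IsDyck Q ∧ Q.length = l ∧ area Q = a ∧ lastDescentLen Q = k + 1}
      {P | IsDyck P ∧ P.length = l + 2 ∧ endsUDkUD P k ∧ area P = a + 1} := by
  refine ⟨?mapsTo, (List.append_left_injective _).injOn, ?surjOn⟩
  case mapsTo =>
    rintro Q ⟨hQ, length_eq, area_eq, descent_eq⟩
    have suffix := (hQ.lastDescentLen_eq_iff_suffix k.succ_ne_zero).1 descent_eq
    exact ⟨(isDyck_append_iff_left isDyck_peak).2 hQ, by simp [length_eq],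
      endsUDkUD_iff_exists_append_peak.2 ⟨Q, suffix, rfl⟩, by
        simp [area_append_peak, hQ.2.2, area_eq]⟩
  case surjOn =>
    rintro P ⟨hP, length_eq, ends, area_eq⟩
    obtain ⟨Q, suffix, rfl⟩ := endsUDkUD_iff_exists_append_peak.1 ends
    have hQ : IsDyck Q := (isDyck_append_iff_left isDyck_peak).1 hP
    rw [area_append_peak, hQ.2.2, mul_zero, add_zero] at area_eq
    exact ⟨Q, ⟨hQ, by simpa using length_eq, add_right_cancel area_eq,
      (hQ.lastDescentLen_eq_iff_suffix k.succ_ne_zero).2 suffix⟩, rfl⟩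

/-- For `n ≥ 3`, `0 ≤ k ≤ n − 2` and `i ∈ ℕ`: the number of Dyck
paths of semilength `n` of rank `i` ending with `U D^{k+1} U D` equals the number
of Dyck paths of semilength `n − 1` of rank `i` whose last descent has length
exactly `k + 1`. (Thus the coefficient of `x^i` in `P_n^{(k)}(x)` counts Dyck paths
of semilength `n − 1` at rank `i` with final descent of length exactly `k + 1`.) -/
theorem Pnk_coeff_counts_final_descent (n k i : ℕ) (hn : 3 ≤ n) (hk : k ≤ n - 2) :
    Nat.card {P : List ℤ // IsDyck P ∧ P.length = 2 * n ∧
        endsUDkUD P k ∧ area P = (n : ℤ) + 2 * i} =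
    Nat.card {Q : List ℤ // IsDyck Q ∧ Q.length = 2 * (n - 1) ∧
        area Q = ((n : ℤ) - 1) + 2 * i ∧ lastDescentLen Q = k + 1} := by
  have length_eq : 2 * n = 2 * (n - 1) + 2 := by lia
  have area_eq : (n : ℤ) + 2 * i = (n : ℤ) - 1 + 2 * i + 1 := by ring
  rw [length_eq, area_eq]
  exact Nat.card_congr ((bijOn_append_peak (2 * (n - 1)) k ((n : ℤ) - 1 + 2 * i)).equiv _).symm
end

section
/- For all n ≥ 2, L^{n−2}(1) = Σ_{k=0}^{n−2} P_n^{(k)}(x) · t^k in ℝ[x,t], where L^{n−2} denotes the (n−2)-fold composition of L with itself and the integer polynomials P_n^{(k)}(x) are regarded as elements of ℝ[x]. -/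
/-- The operator `L` on `ℝ[x][t]` (the outer variable `X` is `t`, the inner one
is `x`): it is the unique `ℝ`-linear endomorphism of `ℝ[x,t]` with
`L(x^α t^β) = x^α · Σ_{i=0}^{β+1} x^i t^i`. -/
noncomputable def Lop (q : Polynomial (Polynomial ℝ)) : Polynomial (Polynomial ℝ) :=
  ∑ β ∈ q.support, Polynomial.C (q.coeff β) *
    ∑ i ∈ Finset.range (β + 2), Polynomial.C (Polynomial.X ^ i) * Polynomial.X ^ i

/-- A Dyck prefix: a path with steps `±1` that never goes below height `0`. -/
def IsDyckPrefix (s : List ℤ) : Prop :=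
  (∀ x ∈ s, x = 1 ∨ x = -1) ∧ ∀ i : ℕ, 0 ≤ (s.take i).sum

/-- The height at which a path ends, as a natural number; it is meant for Dyck prefixes, and is `0`
if the path ends below height `0`. -/
def finalHeight (s : List ℤ) : ℕ := s.sum.toNat

/-- The steps `U D^r`: an up step and the down steps before the next one. -/
def upDowns (r : ℕ) : List ℤ := 1 :: List.replicate r (-1)

/-- The Dyck path `t U D^{k+1} U D` obtained from a Dyck prefix `t` of final height `k`. -/
def completion (t : List ℤ) : List ℤ := t ++ upDowns (finalHeight t + 1) ++ upDowns 1

/-- The level `m` of the generating tree: the Dyck prefixes with exactly `m` up steps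
(see `mem_dyckPrefixes`), generated by appending `U D^r`. -/
def dyckPrefixes : ℕ → Finset (List ℤ)
  | 0 => {[]}
  | m + 1 => (dyckPrefixes m).biUnion fun t =>
      (Finset.range (finalHeight t + 2)).image fun r => t ++ upDowns r

/-- The rank `(area - n) / 2` of a Dyck path, where the semilength `n` is read off as half the
length. On Dyck paths neither the division nor `Int.toNat` loses information. -/
def dyckRank (s : List ℤ) : ℕ := ((area s - (s.length / 2 : ℕ)) / 2).toNat

section Steps

lemma upDowns_succ (r : ℕ) : upDowns (r + 1) = upDowns r ++ [-1] := by
  simp only [upDowns, List.replicate_succ', List.cons_append]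

lemma length_upDowns (r : ℕ) : (upDowns r).length = r + 1 := by
  simp only [upDowns, List.length_cons, List.length_replicate]

lemma sum_upDowns (r : ℕ) : (upDowns r).sum = 1 - r := by
  simp only [upDowns, List.sum_cons, List.sum_replicate, nsmul_eq_mul]
  ring

lemma append_upDowns_inj {s t : List ℤ} {a b : ℕ} :
    s ++ upDowns a = t ++ upDowns b ↔ s = t ∧ a = b := by
  refine ⟨fun h => ?_, by rintro ⟨rfl, rfl⟩; rfl⟩
  have last_ne (u v : List ℤ) (c : ℕ) : u ++ upDowns 0 ≠ v ++ upDowns (c + 1) := fun h => by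
    rw [upDowns_succ, ← List.append_assoc] at h
    exact absurd (List.append_inj_right' h rfl) (by decide)
  induction a generalizing b with
  | zero =>
    cases b with
    | zero => exact ⟨List.append_cancel_right h, rfl⟩
    | succ b => exact absurd h (last_ne s t b)
  | succ a ih =>
    cases b with
    | zero => exact absurd h.symm (last_ne t s a)
    | succ b =>
      rw [upDowns_succ, upDowns_succ, ← List.append_assoc, ← List.append_assoc] at h
      obtain ⟨hst, hab⟩ := ih (List.append_cancel_right h)
      exact ⟨hst, congrArg (· + 1) hab⟩

lemma completion_injective : Function.Injective completion := fun _ _ h =>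
  (append_upDowns_inj.1 (append_upDowns_inj.1 h).1).1

lemma eq_replicate_or_eq_append_upDowns {s : List ℤ} (hs : ∀ x ∈ s, x = 1 ∨ x = -1) :
    (∃ r, s = List.replicate r (-1)) ∨ ∃ t r, s = t ++ upDowns r := by
  induction s with
  | nil => exact Or.inl ⟨0, rfl⟩
  | cons x s ih =>
    obtain ⟨hx, hs⟩ := List.forall_mem_cons.1 hs
    rcases ih hs with ⟨r, rfl⟩ | ⟨t, r, rfl⟩
    · rcases hx with rfl | rfl
      · exact Or.inr ⟨[], r, rfl⟩
      · exact Or.inl ⟨r + 1, rfl⟩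
    · exact Or.inr ⟨x :: t, r, rfl⟩

end Steps

section Area

lemma area_concat (s : List ℤ) (x : ℤ) : area (s ++ [x]) = area s + (s.sum + x) := by
  rw [area, List.length_append, List.length_singleton, Finset.sum_range_succ, area]
  congr 1
  · refine Finset.sum_congr rfl fun i hi => ?_
    rw [List.take_append_of_le_length (Finset.mem_range_succ_iff.1 hi)]
  · rw [List.take_of_length_le (by simp), List.sum_append, List.sum_singleton]

-- Appending `U D^r` at height `h` visits the heights `h + 1, h, …, h + 1 - r`.
lemma two_mul_area_append_upDowns (t : List ℤ) (r : ℕ) :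
    2 * area (t ++ upDowns r) = 2 * area t + (r + 1) * (2 * (t.sum + 1) - r) := by
  induction r with
  | zero =>
    rw [upDowns, List.replicate_zero, area_concat]
    push_cast
    ring
  | succ r ih =>
    rw [upDowns_succ, ← List.append_assoc, area_concat, mul_add, ih, List.sum_append, sum_upDowns]
    push_cast
    ring

lemma two_mul_area_completion {t : List ℤ} (ht : 0 ≤ t.sum) :
    2 * area (completion t) = 2 * area t + (t.sum + 1) * (t.sum + 2) + 2 := by
  have height_eq : (finalHeight t : ℤ) = t.sum := Int.toNat_of_nonneg ht
  rw [completion, two_mul_area_append_upDowns, two_mul_area_append_upDowns, List.sum_append,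
    sum_upDowns]
  push_cast
  rw [height_eq]
  ring

lemma finalHeight_append_upDowns {t : List ℤ} (ht : 0 ≤ t.sum) (r : ℕ) :
    finalHeight (t ++ upDowns r) = finalHeight t + 1 - r := by
  rw [finalHeight, finalHeight, List.sum_append, sum_upDowns]
  omega

lemma area_completion_append_upDowns {t : List ℤ} (ht : 0 ≤ t.sum) {r : ℕ}
    (hr : r ≤ finalHeight t + 1) :
    area (completion (t ++ upDowns r)) =
      area (completion t) + 1 + 2 * finalHeight (t ++ upDowns r) := by
  have sum_eq : (t ++ upDowns r).sum = t.sum + 1 - r := by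
    rw [List.sum_append, sum_upDowns]
    ring
  have sum_nonneg : 0 ≤ (t ++ upDowns r).sum := by
    rw [finalHeight] at hr
    omega
  have height_eq : (finalHeight (t ++ upDowns r) : ℤ) = t.sum + 1 - r := by
    rw [finalHeight, Int.toNat_of_nonneg sum_nonneg, sum_eq]
  refine mul_left_cancel₀ (two_ne_zero (α := ℤ)) ?_
  rw [height_eq, two_mul_area_completion sum_nonneg, two_mul_area_append_upDowns, sum_eq]
  linear_combination -two_mul_area_completion ht

end Area

section Prefixes

lemma isDyck_iff {s : List ℤ} : IsDyck s ↔ IsDyckPrefix s ∧ s.sum = 0 :=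
  and_assoc.symm

lemma isDyckPrefix_concat {s : List ℤ} {x : ℤ} :
    IsDyckPrefix (s ++ [x]) ↔ IsDyckPrefix s ∧ (x = 1 ∨ x = -1) ∧ 0 ≤ s.sum + x := by
  have nonneg_iff : (∀ i, 0 ≤ ((s ++ [x]).take i).sum) ↔
      (∀ i, 0 ≤ (s.take i).sum) ∧ 0 ≤ s.sum + x := by
    refine ⟨fun h => ⟨fun i => ?_, ?_⟩, fun ⟨hs, hx⟩ i => ?_⟩
    · rw [List.take_eq_take_min, ← List.take_append_of_le_length (min_le_right i s.length)]
      exact h _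
    · simpa using h (s.length + 1)
    · rcases le_or_gt i s.length with hi | hi
      · rw [List.take_append_of_le_length hi]
        exact hs i
      · rwa [List.take_of_length_le (by simpa using hi), List.sum_append, List.sum_singleton]
  simp only [IsDyckPrefix, nonneg_iff, List.forall_mem_append, List.forall_mem_singleton]
  tauto

namespace IsDyckPrefix

variable {s : List ℤ}

lemma sum_nonneg (hs : IsDyckPrefix s) : 0 ≤ s.sum := by
  simpa only [List.take_length] using hs.2 s.length

lemma cast_finalHeight (hs : IsDyckPrefix s) : (finalHeight s : ℤ) = s.sum :=
  Int.toNat_of_nonneg hs.sum_nonneg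

lemma sum_le_length (hs : IsDyckPrefix s) : s.sum ≤ s.length := by
  have step_le_one : ∀ x ∈ s, x ≤ 1 := fun x hx => by rcases hs.1 x hx with rfl | rfl <;> decide
  simpa only [nsmul_eq_mul, mul_one] using List.sum_le_card_nsmul s 1 step_le_one

end IsDyckPrefix

lemma isDyckPrefix_append_upDowns {t : List ℤ} {r : ℕ} :
    IsDyckPrefix (t ++ upDowns r) ↔ IsDyckPrefix t ∧ (r : ℤ) ≤ t.sum + 1 := by
  induction r with
  | zero =>
    rw [upDowns, List.replicate_zero, isDyckPrefix_concat]
    exact ⟨fun ⟨ht, _, hsum⟩ => ⟨ht, hsum⟩, fun ⟨ht, hsum⟩ => ⟨ht, Or.inl rfl, hsum⟩⟩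
  | succ r ih =>
    rw [upDowns_succ, ← List.append_assoc, isDyckPrefix_concat, ih, List.sum_append, sum_upDowns]
    push_cast
    constructor
    · rintro ⟨⟨ht, -⟩, -, hsum⟩
      exact ⟨ht, by linarith⟩
    · rintro ⟨ht, hr⟩
      exact ⟨⟨ht, by linarith⟩, by decide, by linarith⟩

lemma mem_dyckPrefixes_succ {m : ℕ} {s : List ℤ} :
    s ∈ dyckPrefixes (m + 1) ↔
      ∃ t ∈ dyckPrefixes m, ∃ r ≤ finalHeight t + 1, t ++ upDowns r = s := by
  simp only [dyckPrefixes, Finset.mem_biUnion, Finset.mem_image, Finset.mem_range, Nat.lt_succ_iff]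

-- The sum of length and final height is twice the number of up steps.
lemma mem_dyckPrefixes {m : ℕ} {s : List ℤ} :
    s ∈ dyckPrefixes m ↔ IsDyckPrefix s ∧ s.length + s.sum = 2 * m := by
  induction m generalizing s with
  | zero =>
    rw [dyckPrefixes, Finset.mem_singleton]
    constructor
    · rintro rfl
      simp [IsDyckPrefix]
    · rintro ⟨hs, hlen⟩
      have := hs.sum_nonneg
      exact List.length_eq_zero_iff.1 (by omega)
  | succ m ih =>
    rw [mem_dyckPrefixes_succ]
    constructor
    · rintro ⟨t, ht, r, hr, rfl⟩
      obtain ⟨ht, hlen⟩ := ih.1 ht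
      have height_eq := ht.cast_finalHeight
      refine ⟨isDyckPrefix_append_upDowns.2 ⟨ht, by omega⟩, ?_⟩
      rw [List.length_append, List.sum_append, length_upDowns, sum_upDowns]
      omega
    · rintro ⟨hs, hlen⟩
      rcases eq_replicate_or_eq_append_upDowns hs.1 with ⟨r, rfl⟩ | ⟨t, r, rfl⟩
      · rw [List.length_replicate, List.sum_replicate, nsmul_eq_mul] at hlen
        omega
      · obtain ⟨ht, hr⟩ := isDyckPrefix_append_upDowns.1 hs
        have height_eq := ht.cast_finalHeight
        rw [List.length_append, List.sum_append, length_upDowns, sum_upDowns] at hlen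
        exact ⟨t, ih.2 ⟨ht, by omega⟩, r, by omega, rfl⟩

lemma finalHeight_le {m : ℕ} {t : List ℤ} (ht : t ∈ dyckPrefixes m) : finalHeight t ≤ m := by
  obtain ⟨hpre, hlen⟩ := mem_dyckPrefixes.1 ht
  have := hpre.cast_finalHeight
  have := hpre.sum_le_length
  omega

lemma length_completion {m : ℕ} {t : List ℤ} (ht : t ∈ dyckPrefixes m) :
    (completion t).length = 2 * (m + 2) := by
  obtain ⟨hpre, hlen⟩ := mem_dyckPrefixes.1 ht
  have := hpre.cast_finalHeight
  rw [completion, List.length_append, List.length_append, length_upDowns, length_upDowns]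
  omega

lemma endsUDkUD_iff {s : List ℤ} {k : ℕ} :
    endsUDkUD s k ↔ ∃ t, s = t ++ upDowns (k + 1) ++ upDowns 1 := by
  simp only [endsUDkUD, upDowns, List.append_assoc, List.cons_append, List.replicate_one]

lemma isDyck_append_upDowns_iff {t : List ℤ} {k : ℕ} :
    IsDyck (t ++ upDowns (k + 1) ++ upDowns 1) ↔ IsDyckPrefix t ∧ t.sum = k := by
  rw [isDyck_iff, isDyckPrefix_append_upDowns, isDyckPrefix_append_upDowns]
  simp only [List.sum_append, sum_upDowns]
  push_cast
  constructor
  · rintro ⟨⟨⟨ht, -⟩, -⟩, hsum⟩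
    exact ⟨ht, by linarith⟩
  · rintro ⟨ht, hsum⟩
    exact ⟨⟨⟨ht, by linarith⟩, by linarith⟩, by linarith⟩

lemma isDyck_and_endsUDkUD_iff {m k : ℕ} {s : List ℤ} :
    IsDyck s ∧ s.length = 2 * (m + 2) ∧ endsUDkUD s k ↔
      ∃ t ∈ dyckPrefixes m, finalHeight t = k ∧ completion t = s := by
  rw [endsUDkUD_iff]
  constructor
  · rintro ⟨hdyck, hlen, t, rfl⟩
    obtain ⟨ht, hsum⟩ := isDyck_append_upDowns_iff.1 hdyck
    have height_eq : finalHeight t = k := by rw [finalHeight, hsum, Int.toNat_natCast]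
    rw [List.length_append, List.length_append, length_upDowns, length_upDowns] at hlen
    exact ⟨t, mem_dyckPrefixes.2 ⟨ht, by omega⟩, height_eq, by rw [completion, height_eq]⟩
  · rintro ⟨t, ht, rfl, rfl⟩
    have hpre := (mem_dyckPrefixes.1 ht).1
    exact ⟨isDyck_append_upDowns_iff.2 ⟨hpre, hpre.cast_finalHeight.symm⟩, length_completion ht,
      t, rfl⟩

end Prefixes

section Rank

lemma exists_area_completion_eq {m : ℕ} {t : List ℤ} (ht : t ∈ dyckPrefixes m) :
    ∃ w ≤ m * m, area (completion t) = m + 2 + 2 * w := by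
  induction m generalizing t with
  | zero =>
    rw [dyckPrefixes, Finset.mem_singleton] at ht
    subst ht
    exact ⟨0, le_rfl, by decide⟩
  | succ m ih =>
    have height_le := finalHeight_le ht
    obtain ⟨s, hs, r, hr, rfl⟩ := mem_dyckPrefixes_succ.1 ht
    obtain ⟨w, hw, harea⟩ := ih hs
    refine ⟨w + finalHeight (s ++ upDowns r), by nlinarith, ?_⟩
    rw [area_completion_append_upDowns (mem_dyckPrefixes.1 hs).1.sum_nonneg hr, harea]
    push_cast
    ring

lemma dyckRank_completion_eq_iff {m : ℕ} {t : List ℤ} (ht : t ∈ dyckPrefixes m) {i : ℕ} :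
    dyckRank (completion t) = i ↔ area (completion t) = m + 2 + 2 * i := by
  obtain ⟨w, -, harea⟩ := exists_area_completion_eq ht
  rw [dyckRank, length_completion ht, harea]
  omega

lemma dyckRank_completion_le {m : ℕ} {t : List ℤ} (ht : t ∈ dyckPrefixes m) :
    dyckRank (completion t) ≤ m * m := by
  obtain ⟨w, hw, harea⟩ := exists_area_completion_eq ht
  exact ((dyckRank_completion_eq_iff ht).2 harea).trans_le hw

lemma dyckRank_completion_append_upDowns {m r : ℕ} {t : List ℤ} (ht : t ∈ dyckPrefixes m)
    (hr : r ≤ finalHeight t + 1) :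
    dyckRank (completion (t ++ upDowns r)) =
      dyckRank (completion t) + finalHeight (t ++ upDowns r) := by
  rw [dyckRank_completion_eq_iff (mem_dyckPrefixes_succ.2 ⟨t, ht, r, hr, rfl⟩),
    area_completion_append_upDowns (mem_dyckPrefixes.1 ht).1.sum_nonneg hr,
    (dyckRank_completion_eq_iff ht).1 rfl]
  push_cast
  ring

lemma card_isDyck_endsUDkUD_area_eq (m k i : ℕ) :
    Nat.card {s : List ℤ // IsDyck s ∧ s.length = 2 * (m + 2) ∧ endsUDkUD s k ∧
      area s = ((m + 2 : ℕ) : ℤ) + 2 * i} =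
      {t ∈ dyckPrefixes m | finalHeight t = k ∧ dyckRank (completion t) = i}.card := by
  rw [← Finset.card_image_of_injective _ completion_injective]
  refine Nat.subtype_card _ fun s => ?_
  rw [← and_assoc (a := s.length = _), ← and_assoc, isDyck_and_endsUDkUD_iff]
  simp only [Finset.mem_image, Finset.mem_filter, Nat.cast_add, Nat.cast_ofNat]
  constructor
  · rintro ⟨t, ⟨ht, hk, hi⟩, rfl⟩
    exact ⟨⟨t, ht, hk, rfl⟩, (dyckRank_completion_eq_iff ht).1 hi⟩
  · rintro ⟨⟨t, ht, hk, rfl⟩, harea⟩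
    exact ⟨t, ⟨ht, hk, (dyckRank_completion_eq_iff ht).2 harea⟩, rfl⟩

end Rank

section GeneratingFunction

open Polynomial

/-- The monomial `x^ρ t^h` of a Dyck prefix of final height `h` whose completion has rank `ρ`. -/
noncomputable def prefixMonomial (t : List ℤ) : ℝ[X][X] :=
  C (X ^ dyckRank (completion t)) * X ^ finalHeight t

lemma Pnk_eq_sum_X_pow_dyckRank (m k : ℕ) :
    Pnk (m + 2) k = ∑ t ∈ dyckPrefixes m with finalHeight t = k, X ^ dyckRank (completion t) := by
  have rank_mem_range : ∀ t ∈ {t ∈ dyckPrefixes m | finalHeight t = k},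
      dyckRank (completion t) ∈ Finset.range ((m + 2) * (m + 2) + 1) := fun t ht => by
    have := dyckRank_completion_le (Finset.mem_filter.1 ht).1
    exact Finset.mem_range.2 (by nlinarith)
  rw [Pnk, ← Finset.sum_fiberwise_of_maps_to' rank_mem_range fun i => (X : ℤ[X]) ^ i]
  refine Finset.sum_congr rfl fun i _ => ?_
  rw [card_isDyck_endsUDkUD_area_eq, Finset.filter_filter, Finset.sum_const, nsmul_eq_mul,
    map_natCast]

lemma Lop_eq_sum (q : ℝ[X][X]) :
    Lop q = q.sum fun β a => C a * ∑ i ∈ Finset.range (β + 2), C (X ^ i) * X ^ i := rfl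

lemma Lop_add (p q : ℝ[X][X]) : Lop (p + q) = Lop p + Lop q := by
  simp only [Lop_eq_sum]
  exact sum_add_index p q _ (fun _ => by rw [C_0, zero_mul]) fun _ _ _ => by rw [C_add, add_mul]

lemma Lop_sum {ι : Type*} (s : Finset ι) (f : ι → ℝ[X][X]) :
    Lop (∑ i ∈ s, f i) = ∑ i ∈ s, Lop (f i) :=
  map_sum (AddMonoidHom.mk' Lop Lop_add) f s

lemma Lop_C_mul_X_pow (a : ℝ[X]) (b : ℕ) :
    Lop (C a * X ^ b) = C a * ∑ i ∈ Finset.range (b + 2), C (X ^ i) * X ^ i := by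
  rw [C_mul_X_pow_eq_monomial, Lop_eq_sum]
  exact sum_monomial_index a _ (by rw [C_0, zero_mul])

lemma Lop_prefixMonomial {m : ℕ} {t : List ℤ} (ht : t ∈ dyckPrefixes m) :
    Lop (prefixMonomial t) =
      ∑ r ∈ Finset.range (finalHeight t + 2), prefixMonomial (t ++ upDowns r) := by
  rw [prefixMonomial, Lop_C_mul_X_pow, ← Finset.sum_range_reflect, Finset.mul_sum]
  refine Finset.sum_congr rfl fun r hr => ?_
  rw [prefixMonomial, dyckRank_completion_append_upDowns ht (Finset.mem_range_succ_iff.1 hr),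
    finalHeight_append_upDowns (mem_dyckPrefixes.1 ht).1.sum_nonneg, pow_add, C_mul, mul_assoc]
  rfl

lemma sum_dyckPrefixes_succ {M : Type*} [AddCommMonoid M] (m : ℕ) (f : List ℤ → M) :
    ∑ s ∈ dyckPrefixes (m + 1), f s =
      ∑ t ∈ dyckPrefixes m, ∑ r ∈ Finset.range (finalHeight t + 2), f (t ++ upDowns r) := by
  rw [dyckPrefixes, Finset.sum_biUnion]
  · refine Finset.sum_congr rfl fun t _ => Finset.sum_image fun a _ b _ h => ?_
    exact (append_upDowns_inj.1 h).2
  · refine fun s _ t _ hst => Finset.disjoint_left.2 fun u hs ht => hst ?_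
    obtain ⟨a, -, rfl⟩ := Finset.mem_image.1 hs
    obtain ⟨b, -, h⟩ := Finset.mem_image.1 ht
    exact (append_upDowns_inj.1 h).1.symm

lemma Lop_iterate_one (m : ℕ) : Lop^[m] 1 = ∑ t ∈ dyckPrefixes m, prefixMonomial t := by
  induction m with
  | zero =>
    have rank_nil : dyckRank (completion []) = 0 := by decide
    simp [dyckPrefixes, prefixMonomial, rank_nil, finalHeight]
  | succ m ih =>
    rw [Function.iterate_succ_apply', ih, Lop_sum, sum_dyckPrefixes_succ]
    exact Finset.sum_congr rfl fun t ht => Lop_prefixMonomial ht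

lemma sum_prefixMonomial_of_finalHeight_eq (m k : ℕ) :
    ∑ t ∈ dyckPrefixes m with finalHeight t = k, prefixMonomial t =
      C ((Pnk (m + 2) k).map (Int.castRingHom ℝ)) * X ^ k := by
  rw [Pnk_eq_sum_X_pow_dyckRank, Polynomial.map_sum, map_sum, Finset.sum_mul]
  refine Finset.sum_congr rfl fun t ht => ?_
  rw [prefixMonomial, (Finset.mem_filter.1 ht).2, Polynomial.map_pow, map_X]

end GeneratingFunction

/-- For all `n ≥ 2`,
`L^{n−2}(1) = Σ_{k=0}^{n−2} P_n^{(k)}(x) · t^k` in `ℝ[x,t]`, where the integer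
polynomials `P_n^{(k)}` are regarded as elements of `ℝ[x]`. -/
theorem Lop_iterate_eq_Pnk_generating (n : ℕ) (hn : 2 ≤ n) :
    Lop^[n - 2] (1 : Polynomial (Polynomial ℝ)) =
      ∑ k ∈ Finset.range (n - 1),
        Polynomial.C ((Pnk n k).map (Int.castRingHom ℝ)) * Polynomial.X ^ k := by
  obtain ⟨m, rfl⟩ := Nat.exists_eq_add_of_le' hn
  have height_mem_range : ∀ t ∈ dyckPrefixes m, finalHeight t ∈ Finset.range (m + 1) :=
    fun t ht => Finset.mem_range_succ_iff.2 (finalHeight_le ht)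
  calc Lop^[m] 1
    _ = ∑ t ∈ dyckPrefixes m, prefixMonomial t := Lop_iterate_one m
    _ = ∑ k ∈ Finset.range (m + 1), ∑ t ∈ dyckPrefixes m with finalHeight t = k,
          prefixMonomial t := (Finset.sum_fiberwise_of_maps_to height_mem_range _).symm
    _ = _ := Finset.sum_congr rfl fun k _ => sum_prefixMonomial_of_finalHeight_eq m k
end
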